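/- Let G be a strong tournament of order n ≥ 3. Then the average distance of ILTT^t(G) converges as t → ∞, with limit lim_{t→∞} L(ILTT^t(G)) = (2 + (n−1)·L(G))/n. -/

import Mathlib

open scoped Classical

noncomputable section

/-- A tournament: a finite directed graph where every pair of distinct nodes
is joined by exactly one arc. -/
structure Tournament where
  V : Type
  [fintypeV : Fintype V]
  [decEqV : DecidableEq V]
  arc : V → V → Prop
  irrefl : ∀ x, ¬ arc x x
  exactlyOne : ∀ x y, x ≠ y → (arc x y ↔ ¬ arc y x)

attribute [instance] Tournament.fintypeV Tournament.decEqV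

namespace Tournament

/-- The ILTT extension: vertices are `V ⊕ V` where `Sum.inl x` is the original
node `x` and `Sum.inr x` is its clone `x'`. -/
def ILTT (T : Tournament) : Tournament where
  V := T.V ⊕ T.V
  arc := fun u v =>
    match u, v with
    | Sum.inl x, Sum.inl y => T.arc x y
    | Sum.inl x, Sum.inr y => T.arc x y
    | Sum.inr x, Sum.inl y => T.arc x y ∨ x = y
    | Sum.inr x, Sum.inr y => T.arc x y
  irrefl := by rintro (x | x) h <;> exact T.irrefl x h
  exactlyOne := by
    rintro (x | x) (y | y) hxy
    · exact T.exactlyOne x y (fun h => hxy (by rw [h]))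
    · by_cases h : x = y
      · subst h; simp [T.irrefl x]
      · have := T.exactlyOne x y h
        simp only [not_or]
        constructor
        · intro ha; exact ⟨this.mp ha, fun h' => h h'.symm⟩
        · intro ha; exact this.mpr ha.1
    · by_cases h : x = y
      · subst h; simp [T.irrefl x]
      · have := T.exactlyOne x y h
        constructor
        · rintro (ha | ha)
          · exact this.mp ha
          · exact absurd ha h
        · intro ha; exact Or.inl (this.mpr ha)
    · exact T.exactlyOne x y (fun h => hxy (by rw [h]))

/-- The dual ILTT extension: identical to `ILTT` except the arcs between
clones are reversed. -/
def ILTTd (T : Tournament) : Tournament where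
  V := T.V ⊕ T.V
  arc := fun u v =>
    match u, v with
    | Sum.inl x, Sum.inl y => T.arc x y
    | Sum.inl x, Sum.inr y => T.arc x y
    | Sum.inr x, Sum.inl y => T.arc x y ∨ x = y
    | Sum.inr x, Sum.inr y => T.arc y x
  irrefl := by rintro (x | x) h <;> exact T.irrefl x h
  exactlyOne := by
    rintro (x | x) (y | y) hxy
    · exact T.exactlyOne x y (fun h => hxy (by rw [h]))
    · by_cases h : x = y
      · subst h; simp [T.irrefl x]
      · have := T.exactlyOne x y h
        simp only [not_or]
        constructor
        · intro ha; exact ⟨this.mp ha, fun h' => h h'.symm⟩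
        · intro ha; exact this.mpr ha.1
    · by_cases h : x = y
      · subst h; simp [T.irrefl x]
      · have := T.exactlyOne x y h
        constructor
        · rintro (ha | ha)
          · exact this.mp ha
          · exact absurd ha h
        · intro ha; exact Or.inl (this.mpr ha)
    · exact T.exactlyOne y x (fun h => hxy (by rw [h]))

/-- A tournament is strong if, for every ordered pair of nodes, there is a
directed path from the first to the second. -/
def Strong (T : Tournament) : Prop := ∀ u v : T.V, Relation.ReflTransGen T.arc u v

/-- `HasWalk T u v n` : there is a directed walk of length `n` from `u` to `v`. -/
def HasWalk (T : Tournament) (u v : T.V) (n : ℕ) : Prop :=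
  ∃ f : Fin (n + 1) → T.V, f 0 = u ∧ f (Fin.last n) = v ∧
    ∀ i : Fin n, T.arc (f i.castSucc) (f i.succ)

/-- The distance from `u` to `v`: the length of a shortest directed path. -/
def dist (T : Tournament) (u v : T.V) : ℕ := sInf {n | HasWalk T u v n}

/-- The diameter: the maximum distance over ordered pairs of distinct nodes. -/
def diam (T : Tournament) : ℕ :=
  (Finset.univ.filter (fun p : T.V × T.V => p.1 ≠ p.2)).sup
    (fun p => T.dist p.1 p.2)

/-- The Wiener index: the sum of distances over ordered pairs of distinct nodes. -/
def wiener (T : Tournament) : ℕ :=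
  ∑ p ∈ Finset.univ.filter (fun p : T.V × T.V => p.1 ≠ p.2), T.dist p.1 p.2

/-- The average distance `L(T) = W(T)/(m(m-1))` where `m` is the order. -/
def avgDist (T : Tournament) : ℝ :=
  (T.wiener : ℝ) / ((Fintype.card T.V : ℝ) * ((Fintype.card T.V : ℝ) - 1))

/-- `J` is a subtournament of `K`. -/
def IsSubtournament (J K : Tournament) : Prop :=
  ∃ f : J.V → K.V, Function.Injective f ∧ ∀ u v : J.V, J.arc u v ↔ K.arc (f u) (f v)

/-- The linear order on `t` nodes. -/
def linearTournament (t : ℕ) : Tournament where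
  V := Fin t
  arc := fun i j => i < j
  irrefl := fun i => lt_irrefl i
  exactlyOne := fun i j h => by
    rw [not_lt]
    exact ⟨le_of_lt, fun hle => hle.lt_of_ne h⟩

/-- A tournament is Hamiltonian if it has a directed cycle through all nodes. -/
def IsHamiltonian (T : Tournament) : Prop :=
  ∃ f : ZMod (Fintype.card T.V) ≃ T.V, ∀ i, T.arc (f i) (f (i + 1))

/-- `S` is an in-dominating set. -/
def InDom (T : Tournament) (S : Finset T.V) : Prop :=
  ∀ u, u ∉ S → ∃ v ∈ S, T.arc u v

/-- `S` is an out-dominating set. -/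
def OutDom (T : Tournament) (S : Finset T.V) : Prop :=
  ∀ u, u ∉ S → ∃ v ∈ S, T.arc v u

/-- The in-domination number. -/
def inDomNum (T : Tournament) : ℕ := sInf {n | ∃ S : Finset T.V, T.InDom S ∧ S.card = n}

/-- The out-domination number. -/
def outDomNum (T : Tournament) : ℕ := sInf {n | ∃ S : Finset T.V, T.OutDom S ∧ S.card = n}

end Tournament

open Tournament

/-!
Count every node at distance `2` from itself, and let `A` be the resulting average of the distance
over all `m²` ordered pairs of nodes of a tournament of order `m`. Suppose that every node lies on a
directed 3-cycle, as in a strong tournament with at least two nodes. If `x ≠ y`, then each of the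
four ordered pairs above `(x, y)` in the ILTT extension is at distance `d(x, y)`. The four pairs
above `(x, x)` are at distances `2`, `2`, `1` (from the clone to `x`) and `3` (from `x` to the
clone, around a 3-cycle), which average to `2`. Hence `A` is invariant under ILTT. Since
`m A = 2 + (m - 1) L`, the average distance is `L = A + (A - 2) / (m - 1)`, and the order `m` tends
to infinity along the iteration.
-/

namespace Tournament

variable {T : Tournament}

section Walks

variable {u v w x : T.V}

theorem arc_asymm (h : T.arc u v) : ¬ T.arc v u := by
  refine (T.exactlyOne u v ?_).1 h
  rintro rfl
  exact T.irrefl u h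

theorem hasWalk_zero : T.HasWalk u v 0 ↔ u = v := by
  constructor
  · rintro ⟨f, rfl, rfl, -⟩
    rfl
  · rintro rfl
    exact ⟨fun _ => u, rfl, rfl, fun i => i.elim0⟩

theorem hasWalk_succ {k : ℕ} :
    T.HasWalk u v (k + 1) ↔ ∃ w, T.arc u w ∧ T.HasWalk w v k := by
  constructor
  · rintro ⟨f, rfl, rfl, hf⟩
    exact ⟨f 1, hf 0, fun i => f i.succ, rfl, rfl, fun i => hf i.succ⟩
  · rintro ⟨w, huw, f, rfl, rfl, hf⟩
    refine ⟨Fin.cons u f, rfl, by rw [← Fin.succ_last, Fin.cons_succ], Fin.cases huw fun i => ?_⟩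
    rw [← Fin.succ_castSucc, Fin.cons_succ, Fin.cons_succ]
    exact hf i

theorem hasWalk_one : T.HasWalk u v 1 ↔ T.arc u v := by
  simp only [hasWalk_succ, hasWalk_zero, exists_eq_right]

theorem hasWalk_two : T.HasWalk u v 2 ↔ ∃ w, T.arc u w ∧ T.arc w v := by
  simp only [hasWalk_succ (k := 1), hasWalk_one]

theorem hasWalk_three : T.HasWalk u v 3 ↔ ∃ w x, T.arc u w ∧ T.arc w x ∧ T.arc x v := by
  simp only [hasWalk_succ (k := 2), hasWalk_two, exists_and_left]

theorem arc_trans_of_not_hasWalk_three (hx : ¬ T.HasWalk x x 3) (hxv : T.arc x v)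
    (hvw : T.arc v w) : T.arc x w := by
  have hxw : x ≠ w := by
    rintro rfl
    exact arc_asymm hxv hvw
  exact (T.exactlyOne x w hxw).2 fun hwx => hx (hasWalk_three.2 ⟨v, w, hxv, hvw, hwx⟩)

theorem Strong.exists_arc [Nontrivial T.V] (hT : T.Strong) (x : T.V) : ∃ y, T.arc x y := by
  obtain ⟨z, hzx⟩ := exists_ne x
  obtain h | ⟨y, hxy, -⟩ := (hT x z).cases_head
  · exact absurd h.symm hzx
  · exact ⟨y, hxy⟩

theorem Strong.hasWalk_three_self [Nontrivial T.V] (hT : T.Strong) (x : T.V) :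
    T.HasWalk x x 3 := by
  by_contra hx
  obtain ⟨y, hxy⟩ := hT.exists_arc x
  have arc_of_reachable {z : T.V} (hyz : Relation.ReflTransGen T.arc y z) : T.arc x z := by
    induction hyz with
    | refl => exact hxy
    | tail _ hvw hxv => exact arc_trans_of_not_hasWalk_three hx hxv hvw
  exact T.irrefl x (arc_of_reachable (hT y x))

theorem dist_le_of_hasWalk {k : ℕ} (h : T.HasWalk u v k) : T.dist u v ≤ k :=
  Nat.sInf_le h

theorem dist_eq_one_of_arc (h : T.arc u v) : T.dist u v = 1 := by
  have hwalk : T.HasWalk u v 1 := hasWalk_one.2 h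
  refine le_antisymm (dist_le_of_hasWalk hwalk) (le_csInf ⟨1, hwalk⟩ fun k hk => ?_)
  rw [Nat.one_le_iff_ne_zero]
  rintro rfl
  obtain rfl := hasWalk_zero.1 hk
  exact T.irrefl u h

end Walks

section Extension

/-- The projection of the ILTT extension onto the original tournament, sending both a node and its
clone to that node. It lets walks be moved between `T.ILTT` and `T` without splitting into cases. -/
def proj (T : Tournament) : T.ILTT.V → T.V := Sum.elim id id

/-- The copy of the node `x` in the ILTT extension. Together with `clone`, it names the two lifts of
`x` as terms of type `T.ILTT.V` rather than of the underlying sum type. -/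
def orig (x : T.V) : T.ILTT.V := Sum.inl x

/-- The clone `x'` of the node `x` in the ILTT extension. -/
def clone (x : T.V) : T.ILTT.V := Sum.inr x

variable {x y : T.V} {u v : T.ILTT.V} {k : ℕ}

theorem orig_ne_clone : orig x ≠ clone x := Sum.inl_ne_inr

theorem sum_ILTT {M : Type*} [AddCommMonoid M] (f : T.ILTT.V → M) :
    ∑ u, f u = ∑ x, f (orig x) + ∑ x, f (clone x) :=
  Fintype.sum_sum_type f

theorem ILTT_arc_orig_left : T.ILTT.arc (orig x) v ↔ T.arc x (T.proj v) := by
  cases v <;> rfl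

theorem ILTT_arc_clone_right : T.ILTT.arc u (clone y) ↔ T.arc (T.proj u) y := by
  cases u <;> rfl

theorem ILTT_arc_of_arc_proj (h : T.arc (T.proj u) (T.proj v)) : T.ILTT.arc u v := by
  rcases u with x | x <;> rcases v with y | y
  exacts [h, h, Or.inl h, h]

theorem arc_proj_or_eq_of_ILTT_arc (h : T.ILTT.arc u v) :
    T.arc (T.proj u) (T.proj v) ∨ T.proj u = T.proj v := by
  rcases u with x | x <;> rcases v with y | y
  exacts [Or.inl h, Or.inl h, h, Or.inl h]

theorem ILTT_hasWalk_of_hasWalk_proj (hk : k ≠ 0) (h : T.HasWalk (T.proj u) (T.proj v) k) :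
    T.ILTT.HasWalk u v k := by
  induction k, Nat.one_le_iff_ne_zero.2 hk using Nat.le_induction generalizing u with
  | base => exact hasWalk_one.2 (ILTT_arc_of_arc_proj (hasWalk_one.1 h))
  | succ k hk1 ih =>
    obtain ⟨w, huw, hwv⟩ := hasWalk_succ.1 h
    exact hasWalk_succ.2 ⟨orig w, ILTT_arc_of_arc_proj huw, ih (by omega) hwv⟩

theorem exists_hasWalk_proj_le (h : T.ILTT.HasWalk u v k) :
    ∃ m ≤ k, T.HasWalk (T.proj u) (T.proj v) m := by
  induction k generalizing u with
  | zero => exact ⟨0, le_rfl, hasWalk_zero.2 (congrArg T.proj (hasWalk_zero.1 h))⟩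
  | succ k ih =>
    obtain ⟨w, huw, hwv⟩ := hasWalk_succ.1 h
    obtain ⟨m, hmk, hm⟩ := ih hwv
    obtain harc | heq := arc_proj_or_eq_of_ILTT_arc huw
    · exact ⟨m + 1, Nat.succ_le_succ hmk, hasWalk_succ.2 ⟨_, harc, hm⟩⟩
    · exact ⟨m, Nat.le_succ_of_le hmk, heq ▸ hm⟩

theorem ILTT_hasWalk_three_self (hT : ∀ x, T.HasWalk x x 3) (u : T.ILTT.V) :
    T.ILTT.HasWalk u u 3 :=
  ILTT_hasWalk_of_hasWalk_proj three_ne_zero (hT (T.proj u))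

theorem ILTT_dist_of_proj_ne (h : T.proj u ≠ T.proj v) :
    T.ILTT.dist u v = T.dist (T.proj u) (T.proj v) := by
  refine csInf_eq_csInf_of_forall_exists_le (fun k hk => ?_) fun k hk => ⟨k, ?_, le_rfl⟩
  · obtain ⟨m, hmk, hm⟩ := exists_hasWalk_proj_le hk
    exact ⟨m, hm, hmk⟩
  · refine ILTT_hasWalk_of_hasWalk_proj ?_ hk
    rintro rfl
    exact h (hasWalk_zero.1 hk)

theorem ILTT_dist_clone_orig (x : T.V) : T.ILTT.dist (clone x) (orig x) = 1 :=
  dist_eq_one_of_arc (Or.inr rfl)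

theorem three_le_of_hasWalk_orig_clone (h : T.ILTT.HasWalk (orig x) (clone x) k) :
    3 ≤ k := by
  by_contra! hk
  interval_cases k
  · exact orig_ne_clone (hasWalk_zero.1 h)
  · exact T.irrefl x (ILTT_arc_orig_left.1 (hasWalk_one.1 h))
  · obtain ⟨w, hxw, hwx⟩ := hasWalk_two.1 h
    exact arc_asymm (ILTT_arc_orig_left.1 hxw) (ILTT_arc_clone_right.1 hwx)

theorem ILTT_dist_orig_clone (hx : T.HasWalk x x 3) :
    T.ILTT.dist (orig x) (clone x) = 3 := by
  have hwalk : T.ILTT.HasWalk (orig x) (clone x) 3 :=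
    ILTT_hasWalk_of_hasWalk_proj three_ne_zero hx
  exact le_antisymm (dist_le_of_hasWalk hwalk)
    (le_csInf ⟨3, hwalk⟩ fun _ => three_le_of_hasWalk_orig_clone)

theorem card_ILTT (T : Tournament) : Fintype.card T.ILTT.V = 2 * Fintype.card T.V := by
  rw [two_mul, ← Fintype.card_sum]
  exact Fintype.card_congr (Equiv.refl _)

theorem card_iterate_ILTT (T : Tournament) (t : ℕ) :
    Fintype.card (ILTT^[t] T).V = 2 ^ t * Fintype.card T.V := by
  induction t generalizing T with
  | zero => exact (one_mul _).symm
  | succ t ih => rw [Function.iterate_succ_apply, ih, card_ILTT, pow_succ, mul_assoc]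

end Extension

section AugmentedDistance

/-- The augmented distance: the distance with the diagonal value `0` replaced by `2`, which is the
value that makes its average invariant under `ILTT`. -/
def augDist (T : Tournament) (u v : T.V) : ℕ := if u = v then 2 else T.dist u v

/-- The average of the augmented distance over all ordered pairs of nodes, equal or not. It is the
limit of the average distances when every node lies on a directed 3-cycle. -/
def avgAugDist (T : Tournament) : ℝ :=
  (∑ u, ∑ v, T.augDist u v : ℕ) / (Fintype.card T.V : ℝ) ^ 2

theorem augDist_self (u : T.V) : T.augDist u u = 2 := if_pos rfl

theorem augDist_of_ne {u v : T.V} (h : u ≠ v) : T.augDist u v = T.dist u v := if_neg h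

theorem ILTT_augDist_of_proj_ne {u v : T.ILTT.V} (h : T.proj u ≠ T.proj v) :
    T.ILTT.augDist u v = T.augDist (T.proj u) (T.proj v) := by
  rw [augDist_of_ne h, augDist_of_ne (ne_of_apply_ne T.proj h), ILTT_dist_of_proj_ne h]

theorem sum_augDist_lifts {x : T.V} (hx : T.HasWalk x x 3) (y : T.V) :
    T.ILTT.augDist (orig x) (orig y) + T.ILTT.augDist (orig x) (clone y) +
      (T.ILTT.augDist (clone x) (orig y) + T.ILTT.augDist (clone x) (clone y)) =
      4 * T.augDist x y := by
  obtain rfl | hxy := eq_or_ne x y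
  · rw [augDist_self, augDist_self, augDist_self, augDist_of_ne orig_ne_clone,
      augDist_of_ne orig_ne_clone.symm, ILTT_dist_orig_clone hx, ILTT_dist_clone_orig]
  · have lift {u v : T.ILTT.V} (hu : T.proj u = x) (hv : T.proj v = y) :
        T.ILTT.augDist u v = T.augDist x y := by
      subst hu hv
      exact ILTT_augDist_of_proj_ne hxy
    rw [lift rfl rfl, lift rfl rfl, lift rfl rfl, lift rfl rfl]
    ring

theorem sum_augDist_ILTT (hT : ∀ x, T.HasWalk x x 3) :
    ∑ u, ∑ v, T.ILTT.augDist u v = 4 * ∑ x, ∑ y, T.augDist x y := by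
  simp only [sum_ILTT, ← Finset.sum_add_distrib, sum_augDist_lifts (hT _), Finset.mul_sum]

theorem avgAugDist_ILTT (hT : ∀ x, T.HasWalk x x 3) : T.ILTT.avgAugDist = T.avgAugDist := by
  rw [avgAugDist, avgAugDist, sum_augDist_ILTT hT, card_ILTT]
  push_cast
  rw [mul_pow, show (2 : ℝ) ^ 2 = 4 by norm_num, mul_div_mul_left _ _ four_ne_zero]

theorem avgAugDist_iterate_ILTT (hT : ∀ x, T.HasWalk x x 3) (t : ℕ) :
    (ILTT^[t] T).avgAugDist = T.avgAugDist := by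
  induction t generalizing T with
  | zero => rfl
  | succ t ih =>
    rw [Function.iterate_succ_apply, ih (ILTT_hasWalk_three_self hT), avgAugDist_ILTT hT]

theorem sum_augDist (T : Tournament) :
    ∑ u, ∑ v, T.augDist u v = T.wiener + 2 * Fintype.card T.V := by
  have hwiener : T.wiener = ∑ u, ∑ v, if u = v then 0 else T.dist u v := by
    simp only [wiener, Finset.sum_filter, Fintype.sum_prod_type, ne_eq, ite_not]
  have haug (u v : T.V) :
      T.augDist u v = (if u = v then 0 else T.dist u v) + if u = v then 2 else 0 := by
    by_cases h : u = v <;> simp only [augDist, h, if_true, if_false, zero_add, add_zero]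
  simp only [haug, Finset.sum_add_distrib, ← hwiener, Finset.sum_ite_eq, Finset.mem_univ, if_true,
    Finset.sum_const, Finset.card_univ, smul_eq_mul, mul_comm]

theorem card_sub_one_ne_zero [Nontrivial T.V] : (Fintype.card T.V : ℝ) - 1 ≠ 0 := by
  rw [sub_ne_zero]
  exact_mod_cast Fintype.one_lt_card.ne'

theorem avgAugDist_eq (T : Tournament) [Nontrivial T.V] :
    T.avgAugDist = (2 + ((Fintype.card T.V : ℝ) - 1) * T.avgDist) / Fintype.card T.V := by
  have hcard : (Fintype.card T.V : ℝ) - 1 ≠ 0 := card_sub_one_ne_zero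
  rw [avgAugDist, sum_augDist, avgDist]
  push_cast
  field_simp
  ring

theorem avgDist_eq_avgAugDist_add (T : Tournament) [Nontrivial T.V] :
    T.avgDist = T.avgAugDist + (T.avgAugDist - 2) / ((Fintype.card T.V : ℝ) - 1) := by
  have hcard : (Fintype.card T.V : ℝ) - 1 ≠ 0 := card_sub_one_ne_zero
  rw [avgAugDist_eq]
  field_simp
  ring

end AugmentedDistance

section Limit

theorem nontrivial_of_hasWalk_three_self {x : T.V} (hx : T.HasWalk x x 3) : Nontrivial T.V := by
  obtain ⟨y, -, hxy, -⟩ := hasWalk_three.1 hx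
  refine ⟨x, y, ?_⟩
  rintro rfl
  exact T.irrefl x hxy

instance nontrivial_iterate_ILTT [Nontrivial T.V] (t : ℕ) : Nontrivial (ILTT^[t] T).V := by
  rw [← Fintype.one_lt_card_iff_nontrivial, card_iterate_ILTT]
  exact Fintype.one_lt_card.trans_le (Nat.le_mul_of_pos_left _ (by positivity))

theorem tendsto_card_iterate_ILTT [Nonempty T.V] :
    Filter.Tendsto (fun t : ℕ => Fintype.card (ILTT^[t] T).V) Filter.atTop Filter.atTop := by
  simp only [card_iterate_ILTT]
  exact (tendsto_pow_atTop_atTop_of_one_lt one_lt_two).atTop_mul_const' Fintype.card_pos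

end Limit

end Tournament

-- When `G` is not strong, `dist` is `0` on the unreachable pairs. The lifts of an unreachable pair
-- are unreachable, so the four lifts keep the average `0`.
theorem stmt8_general (G : Tournament) (n : ℕ) (hn : Fintype.card G.V = n) (hn0 : n ≠ 0)
    (hG : ∀ x, G.HasWalk x x 3) :
    Filter.Tendsto (fun t : ℕ => (Tournament.ILTT^[t] G).avgDist) Filter.atTop
      (nhds ((2 + ((n : ℝ) - 1) * G.avgDist) / (n : ℝ))) := by
  subst hn
  obtain ⟨x⟩ : Nonempty G.V := Fintype.card_pos_iff.1 (Nat.pos_of_ne_zero hn0)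
  have : Nontrivial G.V := nontrivial_of_hasWalk_three_self (hG x)
  have horder : Filter.Tendsto (fun t => (Fintype.card (ILTT^[t] G).V : ℝ) - 1)
      Filter.atTop Filter.atTop :=
    Filter.tendsto_atTop_add_const_right _ _
      (tendsto_natCast_atTop_atTop.comp tendsto_card_iterate_ILTT)
  simp only [← avgAugDist_eq, avgDist_eq_avgAugDist_add (ILTT^[_] G),
    avgAugDist_iterate_ILTT hG]
  simpa only [add_zero] using (horder.const_div_atTop (G.avgAugDist - 2)).const_add G.avgAugDist

/-- For a strong tournament `G` of order `n ≥ 3`, the average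
distances of `ILTT^t(G)` converge to `(2 + (n-1)·L(G))/n` as `t → ∞`. -/
theorem stmt8 (G : Tournament) (n : ℕ) (hn : Fintype.card G.V = n)
    (hcard : 3 ≤ n) (hG : G.Strong) :
    Filter.Tendsto (fun t : ℕ => (Tournament.ILTT^[t] G).avgDist) Filter.atTop
      (nhds ((2 + ((n : ℝ) - 1) * G.avgDist) / (n : ℝ))) := by
  have : Nontrivial G.V := Fintype.one_lt_card_iff_nontrivial.1 (by omega)
  exact stmt8_general G n hn (by omega) hG.hasWalk_three_self
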